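/- The Chabauty space C(ℤ²) of the discrete group ℤ² is homeomorphic to ℕ̄ × ℕ̄, where ℕ̄ = ℕ ∪ {∞} is the one-point compactification of ℕ. -/

import Mathlib

/-- The Chabauty space of an additive topological group `G`:
the set of closed additive subgroups of `G`. -/
def ChabautySpace (G : Type*) [AddGroup G] [TopologicalSpace G] : Type _ :=
  {H : AddSubgroup G // IsClosed (H : Set G)}

/-- The Chabauty topology on the space of closed subgroups, generated by the sets
`O_K = {H | H ∩ K = ∅}` for `K` compact and `O'_U = {H | H ∩ U ≠ ∅}` for `U` open. -/
instance ChabautySpace.instTopologicalSpace (G : Type*) [AddGroup G] [TopologicalSpace G] :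
    TopologicalSpace (ChabautySpace G) :=
  TopologicalSpace.generateFrom
    ({S | ∃ K : Set G, IsCompact K ∧ S = {H : ChabautySpace G | (H.1 : Set G) ∩ K = ∅}} ∪
     {S | ∃ U : Set G, IsOpen U ∧ S = {H : ChabautySpace G | ((H.1 : Set G) ∩ U).Nonempty}})

/-!
Both spaces are countable, compact and Hausdorff, and each has a derived set of order `r`, the rank
of the group, that is a single point. Any two such spaces are homeomorphic: the complement of that
point `p` is a disjoint union of countably many clopen sets, each containing exactly one point of
the previous derived set; by induction on `r` these pieces do not depend on the space, and `p` is
recovered by one-point compactification.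

The derived sets of `C(A)`, for `A` free of finite rank, are read off the corank `rank (A ⧸ H)`.
Subgroups close to `H` contain `H`, and only finitely many of those have the same corank as `H`.
Conversely, if `v` has infinite order modulo `H`, then the subgroups `H + ℤ n v` tend to `H` and
have corank one less. Hence `{0}` is the only point of maximal rank. In a power of `ℕ̄` the number
of coordinates equal to `∞` plays the same role.
-/

open Set Filter Topology Function Module

section CantorBendixson

universe u v

variable {X : Type u} {Y : Type v} [TopologicalSpace X] [TopologicalSpace Y]

theorem preimage_iterate_derivedSet {f : X → Y} (hf : IsOpenEmbedding f) (n : ℕ) (A : Set Y) :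
    f ⁻¹' (derivedSet^[n] A) = derivedSet^[n] (f ⁻¹' A) := by
  have hsemi : Semiconj (preimage f) derivedSet derivedSet := fun A => by
    ext x
    rw [mem_derivedSet, ← comap_principal, hf.accPt_comap_iff, mem_preimage, mem_derivedSet]
  exact (hsemi.iterate_right n).eq A

/-- `ρ` is a finite Cantor–Bendixson rank function on `X`: the points of rank at least `n` are the
`n`-th derived set of `X`. The axioms are the local form of this property, namely that near `x` all
other ranks are smaller than `ρ x`, and that `ρ x - 1` is among them arbitrarily close to `x`. -/
structure IsCantorBendixsonRank (ρ : X → ℕ) : Prop where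
  eventually_lt : ∀ x, ∀ᶠ y in 𝓝[≠] x, ρ y < ρ x
  frequently_add_one_eq : ∀ x, ρ x ≠ 0 → ∃ᶠ y in 𝓝[≠] x, ρ y + 1 = ρ x

theorem IsCantorBendixsonRank.iterate_derivedSet_univ {ρ : X → ℕ} (hρ : IsCantorBendixsonRank ρ)
    (n : ℕ) : derivedSet^[n] univ = {x | n ≤ ρ x} := by
  induction n with
  | zero => simp
  | succ n ih =>
    ext x
    rw [iterate_succ_apply', ih, mem_derivedSet, accPt_iff_frequently_nhdsNE]
    constructor
    · intro hfreq
      obtain ⟨y, hny, hyx⟩ := (hfreq.and_eventually (hρ.eventually_lt x)).exists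
      exact Nat.succ_le_of_lt (hny.trans_lt hyx)
    · intro hx
      refine (hρ.frequently_add_one_eq x (Nat.ne_zero_of_lt hx)).mono fun y hy => ?_
      exact Nat.le_of_succ_le_succ (hx.trans_eq hy.symm)

theorem isClosed_iterate_derivedSet_univ [T1Space X] :
    ∀ n : ℕ, IsClosed (derivedSet^[n] (univ : Set X))
  | 0 => isClosed_univ
  | n + 1 => by
    rw [iterate_succ_apply']
    exact isClosed_derivedSet _

theorem infinite_diff_singleton_of_mem_derivedSet [T1Space X] {D : Set X} {p : X}
    (hp : p ∈ derivedSet D) : (D \ {p}).Infinite := fun hfin =>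
  (hfin.isClosed.closure_subset <| mem_closure_iff_clusterPt.2 <|
    accPt_principal_iff_clusterPt.1 hp).2 rfl

theorem isClopen_disjointed {f : ℕ → Set X} (hf : ∀ k, IsClopen (f k)) (k : ℕ) :
    IsClopen (disjointed f k) :=
  disjointedRec (fun _ j ht => ht.diff (hf j)) (hf k)

theorem exists_iterate_derivedSet_univ_subtype_eq_singleton {F : Set X} (hF : IsOpen F) {n : ℕ}
    {d : X} (hd : F ∩ derivedSet^[n] univ = {d}) :
    ∃ d' : F, derivedSet^[n] (univ : Set F) = {d'} := by
  have hdF : d ∈ F := (hd.symm.subset rfl).1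
  refine ⟨⟨d, hdF⟩, ?_⟩
  rw [← preimage_univ (f := ((↑) : F → X)),
    ← preimage_iterate_derivedSet hF.isOpenEmbedding_subtypeVal,
    ← Subtype.preimage_coe_self_inter, hd]
  ext x
  simp [Subtype.ext_iff]

theorem nonempty_homeomorph_sigma {ι : Type*} {α β : ι → Type*} [∀ i, TopologicalSpace (α i)]
    [∀ i, TopologicalSpace (β i)] (h : ∀ i, Nonempty (α i ≃ₜ β i)) :
    Nonempty ((Σ i, α i) ≃ₜ Σ i, β i) :=
  ⟨{ Equiv.sigmaCongrRight fun i => (h i).some.toEquiv with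
    continuous_toFun := continuous_sigma fun i =>
      continuous_sigmaMk.comp (h i).some.continuous
    continuous_invFun := continuous_sigma fun i =>
      continuous_sigmaMk.comp (h i).some.symm.continuous }⟩

theorem nonempty_homeomorph_onePoint_sigma [CompactSpace X] [T2Space X] {ι : Type*}
    {F : ι → Set X} {p : X} (hopen : ∀ i, IsOpen (F i)) (hdisj : Pairwise (Disjoint on F))
    (hcover : ⋃ i, F i = {p}ᶜ) : Nonempty (OnePoint (Σ i, F i) ≃ₜ X) := by
  let f : (Σ i, F i) → X := fun x => x.2
  have hinj : Injective f := by
    rintro ⟨i, x, hx⟩ ⟨j, y, hy⟩ (rfl : x = y)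
    obtain rfl : i = j := hdisj.eq (not_disjoint_iff.2 ⟨x, hx, hy⟩)
    rfl
  have hembed : IsOpenEmbedding f := .of_continuous_injective_isOpenMap
    (continuous_sigma fun i => continuous_subtype_val) hinj
    (isOpenMap_sigma.2 fun i => (hopen i).isOpenMap_subtype_val)
  have hrange : range f = {p}ᶜ := by
    rw [← hcover]
    ext x
    simp [f]
  exact ⟨OnePoint.equivOfIsEmbeddingOfRangeEq p f hembed.isEmbedding hrange⟩

variable [CompactSpace X] [T2Space X] [Countable X]

theorem exists_isClopen_inter_eq_singleton {D : Set X} {d : X} (hd : d ∈ D)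
    (hd' : d ∉ derivedSet D) : ∃ V, IsClopen V ∧ V ∩ D = {d} := by
  rw [mem_derivedSet, accPt_iff_nhds] at hd'
  push Not at hd'
  obtain ⟨U, hU, hUD⟩ := hd'
  obtain ⟨V, hV, hdV, hVU⟩ :=
    compact_exists_isClopen_in_isOpen isOpen_interior (mem_interior_iff_mem_nhds.2 hU)
  refine ⟨V, hV, Subset.antisymm (fun x hx => ?_) (singleton_subset_iff.2 ⟨hdV, hd⟩)⟩
  exact hUD x ⟨interior_subset (hVU hx.1), hx.2⟩

theorem exists_isClopen_iUnion_eq {U : Set X} (hU : IsOpen U) :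
    ∃ W : ℕ → Set X, (∀ k, IsClopen (W k)) ∧ ⋃ k, W k = U := by
  obtain rfl | hne := U.eq_empty_or_nonempty
  · exact ⟨fun _ => ∅, fun _ => isClopen_empty, iUnion_empty⟩
  · obtain ⟨x, rfl⟩ := U.to_countable.exists_eq_range hne
    choose W hW hxW hWU using fun k => compact_exists_isClopen_in_isOpen hU (mem_range_self k)
    exact ⟨W, hW, Subset.antisymm (iUnion_subset hWU)
      (range_subset_iff.2 fun k => mem_iUnion_of_mem k (hxW k))⟩

theorem exists_isClopen_partition_compl_singleton {D : Set X} {p : X} (hD : IsClosed D)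
    (hDp : derivedSet D = {p}) : ∃ F : ℕ → Set X, (∀ k, IsClopen (F k)) ∧
      Pairwise (Disjoint on F) ∧ ⋃ k, F k = {p}ᶜ ∧ ∀ k, ∃ d, F k ∩ D = {d} := by
  have hp : p ∈ derivedSet D := hDp ▸ mem_singleton p
  have hpD : p ∈ D := (isClosed_iff_derivedSet_subset D).1 hD hp
  have := (infinite_diff_singleton_of_mem_derivedSet hp).to_subtype
  obtain ⟨d⟩ : Nonempty (ℕ ≃ ↥(D \ {p})) := nonempty_equiv_of_countable
  choose V hV hVD using fun k => exists_isClopen_inter_eq_singleton (d k).2.1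
    (fun h => (d k).2.2 (hDp.subset h))
  -- The sets `V k` isolate the points of `D` other than `p`; the sets `W k` absorb the rest.
  obtain ⟨W, hW, hWD⟩ := exists_isClopen_iUnion_eq hD.isOpen_compl
  have hW_disj (k) : Disjoint (W k) D :=
    disjoint_compl_left.mono_left (hWD ▸ subset_iUnion W k)
  have hVW (k) : (V k ∪ W k) ∩ D = {(d k : X)} := by
    rw [union_inter_distrib_right, hVD, (hW_disj k).inter_eq, union_empty]
  refine ⟨disjointed fun k => V k ∪ W k, isClopen_disjointed fun k => (hV k).union (hW k),
    disjoint_disjointed _, ?_, fun k => ⟨d k, ?_⟩⟩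
  · rw [iUnion_disjointed]
    refine Subset.antisymm (iUnion_subset fun k x hx hxp => (d k).2.2 ?_) fun x hxp => ?_
    · rw [mem_singleton_iff] at hxp ⊢
      subst hxp
      exact ((hVW k).subset ⟨hx, hpD⟩).symm
    · by_cases hxD : x ∈ D
      · obtain ⟨k, hk⟩ := d.surjective ⟨x, hxD, hxp⟩
        have hxV : x ∈ V k ∩ D := by rw [hVD, hk, mem_singleton_iff]
        exact mem_iUnion_of_mem k (.inl hxV.1)
      · obtain ⟨k, hk⟩ := mem_iUnion.1 (hWD.symm.subset hxD)
        exact mem_iUnion_of_mem k (.inr hk)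
  · rw [disjointed_eq_inter_compl, inter_right_comm, hVW, inter_eq_left, singleton_subset_iff]
    refine mem_iInter₂.2 fun j hj hdj => ?_
    have : (d k : X) ∈ ({(d j : X)} : Set X) := hVW j ▸ ⟨hdj, (d k).2.1⟩
    exact hj.ne' (d.injective (Subtype.ext this))

/-- A case of the Mazurkiewicz–Sierpiński classification of countable compact spaces: finite
Cantor–Bendixson rank, with a single point in the last nonempty derived set. -/
theorem nonempty_homeomorph_of_iterate_derivedSet_eq_singleton
    [CompactSpace Y] [T2Space Y] [Countable Y] {n : ℕ} {p : X} {q : Y}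
    (hX : derivedSet^[n] univ = {p}) (hY : derivedSet^[n] univ = {q}) : Nonempty (X ≃ₜ Y) := by
  induction n generalizing X Y with
  | zero =>
    let : Unique X := ⟨⟨p⟩, fun x => hX.subset (mem_univ x)⟩
    let : Unique Y := ⟨⟨q⟩, fun y => hY.subset (mem_univ y)⟩
    exact ⟨.homeomorphOfUnique X Y⟩
  | succ n ih =>
    rw [iterate_succ_apply'] at hX hY
    obtain ⟨F, hF, hF_disj, hF_cover, hF_inter⟩ :=
      exists_isClopen_partition_compl_singleton (isClosed_iterate_derivedSet_univ n) hX
    obtain ⟨G, hG, hG_disj, hG_cover, hG_inter⟩ :=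
      exists_isClopen_partition_compl_singleton (isClosed_iterate_derivedSet_univ n) hY
    have hFG (k : ℕ) : Nonempty (F k ≃ₜ G k) := by
      have := isCompact_iff_compactSpace.1 (hF k).isClosed.isCompact
      have := isCompact_iff_compactSpace.1 (hG k).isClosed.isCompact
      obtain ⟨d, hd⟩ := hF_inter k
      obtain ⟨d', hd'⟩ := hG_inter k
      obtain ⟨x, hx⟩ := exists_iterate_derivedSet_univ_subtype_eq_singleton (hF k).isOpen hd
      obtain ⟨y, hy⟩ := exists_iterate_derivedSet_univ_subtype_eq_singleton (hG k).isOpen hd'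
      exact ih hx hy
    obtain ⟨e⟩ := nonempty_homeomorph_sigma hFG
    obtain ⟨eX⟩ := nonempty_homeomorph_onePoint_sigma (fun k => (hF k).isOpen) hF_disj hF_cover
    obtain ⟨eY⟩ := nonempty_homeomorph_onePoint_sigma (fun k => (hG k).isOpen) hG_disj hG_cover
    exact ⟨eX.symm.trans (e.onePointCongr.trans eY)⟩

end CantorBendixson

section OnePoint

variable {Y ι : Type*} [Finite ι]

theorem setOf_card_le_ncard_eq_infty :
    {f : ι → OnePoint Y | Nat.card ι ≤ {i | f i = OnePoint.infty}.ncard} =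
      {fun _ => OnePoint.infty} := by
  ext f
  rw [mem_ofPred_eq, mem_singleton_iff, funext_iff, ← ncard_univ]
  constructor
  · intro h
    exact fun i => (eq_of_subset_of_ncard_le (subset_univ _) h).symm.subset (mem_univ i)
  · intro h
    exact ncard_le_ncard fun i _ => h i

variable [TopologicalSpace Y] [DiscreteTopology Y]

theorem eventually_apply_eq_of_ne_infty (f : ι → OnePoint Y) :
    ∀ᶠ g in 𝓝 f, ∀ i, f i ≠ OnePoint.infty → g i = f i := by
  refine eventually_all.2 fun i => ?_
  by_cases hi : f i = OnePoint.infty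
  · exact .of_forall fun g h => absurd hi h
  · obtain ⟨y, hy⟩ := OnePoint.ne_infty_iff_exists.1 hi
    have hopen : IsOpen {f i} := by
      rw [← hy, ← image_singleton]
      exact OnePoint.isOpen_image_coe.2 (isOpen_discrete {y})
    exact ((continuous_apply i).continuousAt.eventually (hopen.mem_nhds rfl)).mono fun g hg _ => hg

theorem isCantorBendixsonRank_ncard_eq_infty [Infinite Y] :
    IsCantorBendixsonRank fun f : ι → OnePoint Y => {i | f i = OnePoint.infty}.ncard where
  eventually_lt f := by
    filter_upwards [nhdsWithin_le_nhds (eventually_apply_eq_of_ne_infty f),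
      self_mem_nhdsWithin] with g hg hne
    refine ncard_lt_ncard (ssubset_iff_subset_ne.2 ⟨fun i hi => ?_, fun heq => hne ?_⟩)
    · by_contra hfi
      exact hfi ((hg i hfi).symm.trans hi)
    · ext1 i
      by_cases hfi : f i = OnePoint.infty
      · exact (heq.symm.subset hfi).trans hfi.symm
      · exact hg i hfi
  frequently_add_one_eq f hf := by
    classical
    have : NoncompactSpace Y :=
      not_compactSpace_iff.1 fun _ => not_finite_iff_infinite.2 ‹_› finite_of_compact_of_discrete
    obtain ⟨i, hi : f i = OnePoint.infty⟩ := nonempty_of_ncard_ne_zero hf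
    have htendsto : Tendsto (update f i) (𝓝[≠] OnePoint.infty) (𝓝[≠] f) := by
      refine tendsto_nhdsWithin_iff.2 ⟨?_, ?_⟩
      · nth_rw 2 [← update_eq_self i f]
        rw [hi]
        exact (continuous_const.update i continuous_id).continuousAt.mono_left nhdsWithin_le_nhds
      · filter_upwards [self_mem_nhdsWithin] with z hz hzf
        exact hz (by simpa [hi] using congrFun hzf i)
    refine htendsto.frequently (Eventually.frequently ?_)
    filter_upwards [self_mem_nhdsWithin] with z hz
    have hdiff : {j | update f i z j = OnePoint.infty} = {j | f j = OnePoint.infty} \ {i} := by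
      ext j
      obtain rfl | hj := eq_or_ne j i
      · simpa using hz
      · simp [hj]
    rw [hdiff, ncard_sdiff_singleton_add_one (mem_ofPred_eq ▸ hi)]

end OnePoint

section Corank

theorem countable_submodule {R M : Type*} [Semiring R] [AddCommMonoid M] [Module R M]
    [Countable M] [IsNoetherian R M] : Countable (Submodule R M) :=
  Surjective.countable (f := fun s : Finset M => Submodule.span R (s : Set M))
    IsNoetherian.noetherian

variable {R M : Type*} [CommRing R] [IsDomain R] [AddCommGroup M] [Module R M]

theorem finrank_quotient_add_finrank_map_mkQ [Module.Finite R M] {N K : Submodule R M} (h : N ≤ K) :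
    finrank R (M ⧸ K) + finrank R (K.map N.mkQ) = finrank R (M ⧸ N) := by
  rw [← (Submodule.quotientQuotientEquivQuotient N K h).finrank_eq,
    Submodule.finrank_quotient_add_finrank]

theorem finrank_quotient_sup_span_singleton_add_one [Module.Finite R M] {N : Submodule R M} {v : M}
    (hv : ∀ r : R, r • v ∈ N → r = 0) :
    finrank R (M ⧸ N ⊔ Submodule.span R {v}) + 1 = finrank R (M ⧸ N) := by
  have hmap : (N ⊔ Submodule.span R {v}).map N.mkQ =
      (LinearMap.toSpanSingleton R (M ⧸ N) (N.mkQ v)).range := by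
    rw [Submodule.map_sup, N.mkQ_map_self, bot_sup_eq, Submodule.map_span, image_singleton,
      LinearMap.span_singleton_eq_range]
  have hinj : Injective (LinearMap.toSpanSingleton R (M ⧸ N) (N.mkQ v)) := by
    refine (injective_iff_map_eq_zero _).2 fun r hr => hv r ?_
    rwa [LinearMap.toSpanSingleton_apply, ← map_smul, Submodule.mkQ_apply,
      Submodule.Quotient.mk_eq_zero] at hr
  rw [← finrank_quotient_add_finrank_map_mkQ (le_sup_left : N ≤ N ⊔ Submodule.span R {v}), hmap,
    LinearMap.finrank_range_of_inj hinj, finrank_self]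

theorem exists_forall_smul_mem_imp_eq_zero [Module.Finite R M] {N : Submodule R M}
    (hN : finrank R (M ⧸ N) ≠ 0) : ∃ v : M, ∀ r : R, r • v ∈ N → r = 0 := by
  rw [Ne, finrank_eq_zero_iff_isTorsion] at hN
  contrapose! hN
  rintro ⟨v⟩
  obtain ⟨r, hr, hr0⟩ := hN v
  exact ⟨⟨r, mem_nonZeroDivisors_of_ne_zero hr0⟩, (Submodule.Quotient.mk_eq_zero N).2 hr⟩

theorem map_mkQ_le_torsion_of_finrank_quotient_eq [IsNoetherianRing R] [Module.Finite R M]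
    {N K : Submodule R M} (h : N ≤ K) (hK : finrank R (M ⧸ K) = finrank R (M ⧸ N)) :
    K.map N.mkQ ≤ Submodule.torsion R (M ⧸ N) := by
  have hrank : finrank R (K.map N.mkQ) = 0 := by
    have := finrank_quotient_add_finrank_map_mkQ h
    omega
  rw [finrank_eq_zero_iff_isTorsion] at hrank
  intro x hx
  obtain ⟨r, hr⟩ := @hrank ⟨x, hx⟩
  exact ⟨r, congrArg Subtype.val hr⟩

variable {A : Type*} [AddCommGroup A]

theorem finite_setOf_le_and_finrank_quotient_eq [Module.Finite ℤ A] (N : Submodule ℤ A) :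
    {K | N ≤ K ∧ finrank ℤ (A ⧸ K) = finrank ℤ (A ⧸ N)}.Finite := by
  have : Finite (Submodule.torsion ℤ (A ⧸ N)) :=
    Module.finite_of_fg_torsion _ (Submodule.torsion_isTorsion)
  refine Finite.of_injOn (f := fun K => (K.map N.mkQ : Set (A ⧸ N)))
    (fun K hK => map_mkQ_le_torsion_of_finrank_quotient_eq hK.1 hK.2) ?_
    (toFinite (Submodule.torsion ℤ (A ⧸ N) : Set (A ⧸ N))).finite_subsets
  intro K hK L hL hKL
  have := congrArg (Submodule.comap N.mkQ) (SetLike.coe_injective hKL)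
  simpa [Submodule.comap_map_mkQ, hK.1, hL.1] using this

theorem eventually_notMem_sup_span_smul {N : Submodule ℤ A} {v x : A}
    (hv : ∀ r : ℤ, r • v ∈ N → r = 0) (hx : x ∉ N) :
    ∀ᶠ n : ℕ in atTop, x ∉ N ⊔ Submodule.span ℤ {(n : ℤ) • v} := by
  by_cases hxv : ∃ c : ℤ, x - c • v ∈ N
  · obtain ⟨c, hc⟩ := hxv
    have hc0 : c ≠ 0 := by
      rintro rfl
      simp [hx] at hc
    filter_upwards [eventually_gt_atTop c.natAbs] with n hn hmem
    obtain ⟨y, hy, _, hz, rfl⟩ := Submodule.mem_sup.1 hmem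
    obtain ⟨m, rfl⟩ := Submodule.mem_span_singleton.1 hz
    have hdvd : m * n - c = 0 := hv _ (by
      convert N.sub_mem hc hy using 1
      module)
    have : (n : ℤ) ∣ c := ⟨m, by linarith⟩
    have := Nat.le_of_dvd (Int.natAbs_pos.2 hc0) (Int.natCast_dvd.1 this)
    omega
  · refine .of_forall fun n hmem => hxv ?_
    obtain ⟨y, hy, _, hz, rfl⟩ := Submodule.mem_sup.1 hmem
    obtain ⟨m, rfl⟩ := Submodule.mem_span_singleton.1 hz
    exact ⟨m * n, by simpa [mul_smul] using hy⟩

end Corank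

namespace ChabautySpace

section Discrete

variable {G : Type*} [AddGroup G] [TopologicalSpace G] [DiscreteTopology G]

theorem isClopen_setOf_mem (x : G) : IsClopen {H : ChabautySpace G | x ∈ H.1} := by
  constructor
  · rw [← isOpen_compl_iff]
    refine TopologicalSpace.isOpen_generateFrom_of_mem (.inl ⟨{x}, isCompact_singleton, ?_⟩)
    ext H
    simp
  · refine TopologicalSpace.isOpen_generateFrom_of_mem (.inr ⟨{x}, isOpen_discrete _, ?_⟩)
    ext H
    simp

theorem tendsto_nhds_iff {ι : Type*} {l : Filter ι} {f : ι → ChabautySpace G}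
    {H : ChabautySpace G} : Tendsto f l (𝓝 H) ↔ ∀ x, ∀ᶠ i in l, (x ∈ (f i).1 ↔ x ∈ H.1) := by
  constructor
  · intro hf x
    by_cases hx : x ∈ H.1
    · filter_upwards [hf.eventually ((isClopen_setOf_mem x).isOpen.mem_nhds hx)] with i hi
      exact iff_of_true hi hx
    · filter_upwards [hf.eventually ((isClopen_setOf_mem x).compl.isOpen.mem_nhds hx)] with i hi
      exact iff_of_false hi hx
  · intro hf
    refine TopologicalSpace.tendsto_nhds_generateFrom_iff.2 ?_
    rintro _ (⟨K, hK, rfl⟩ | ⟨U, -, rfl⟩) hH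
    · filter_upwards [(eventually_all_finite (isCompact_iff_finite.1 hK)).2 fun x _ => hf x]
        with i hi
      exact eq_empty_of_forall_notMem fun x hx => hH.subset ⟨(hi x hx.2).1 hx.1, hx.2⟩
    · obtain ⟨x, hxH, hxU⟩ := hH
      filter_upwards [hf x] with i hi
      exact ⟨x, hi.2 hxH, hxU⟩

instance instTotallySeparatedSpace : TotallySeparatedSpace (ChabautySpace G) := by
  refine totallySeparatedSpace_iff_exists_isClopen.2 fun H K hHK => ?_
  obtain ⟨x, hx⟩ : ∃ x, ¬(x ∈ H.1 ↔ x ∈ K.1) := by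
    by_contra! h
    exact hHK (Subtype.ext (AddSubgroup.ext h))
  by_cases hxH : x ∈ H.1
  · exact ⟨_, isClopen_setOf_mem x, hxH, fun hxK => hx (iff_of_true hxH hxK)⟩
  · exact ⟨_, (isClopen_setOf_mem x).compl, hxH, fun hxK => hx (iff_of_false hxH hxK)⟩

instance instCompactSpace : CompactSpace (ChabautySpace G) := by
  refine ⟨isCompact_iff_ultrafilter_le_nhds.2 fun 𝒰 _ => ?_⟩
  let L : AddSubgroup G :=
    { carrier := {x | ∀ᶠ H : ChabautySpace G in 𝒰, x ∈ H.1}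
      zero_mem' := .of_forall fun H => H.1.zero_mem
      add_mem' := fun hx hy => (hx.and hy).mono fun H h => H.1.add_mem h.1 h.2
      neg_mem' := fun hx => hx.mono fun H h => H.1.neg_mem h }
  refine ⟨⟨L, isClosed_discrete _⟩, mem_univ _, tendsto_nhds_iff (f := id).2 fun x => ?_⟩
  by_cases hx : x ∈ L
  · exact hx.mono fun H hH => iff_of_true hH hx
  · exact (Ultrafilter.eventually_not.2 hx).mono fun H hH => iff_of_false hH hx

theorem eventually_le_of_fg {H : ChabautySpace G} (hH : H.1.FG) : ∀ᶠ K in 𝓝 H, H.1 ≤ K.1 := by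
  obtain ⟨S, hS⟩ := hH
  have hmem : ∀ᶠ K in 𝓝 H, ∀ x ∈ S, x ∈ K.1 := (eventually_all_finset S).2 fun x hx =>
    (isClopen_setOf_mem x).isOpen.mem_nhds (hS.le (AddSubgroup.subset_closure hx))
  filter_upwards [hmem] with K hK
  rw [← hS]
  exact (AddSubgroup.closure_le _).2 hK

end Discrete

section FinitelyGenerated

variable {A : Type*} [AddCommGroup A] [TopologicalSpace A] [DiscreteTopology A]

/-- Closed subgroups of a discrete abelian group, viewed as `ℤ`-submodules so that the dimension
theory of modules applies to them. -/
def equivSubmodule : ChabautySpace A ≃ Submodule ℤ A where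
  toFun H := H.1.toIntSubmodule
  invFun N := ⟨N.toAddSubgroup, isClosed_discrete _⟩
  left_inv _ := rfl
  right_inv _ := rfl

/-- The corank of a subgroup `H` of `A`: the rank of the quotient `A ⧸ H`. It is the
Cantor–Bendixson rank of `H` in the Chabauty space. -/
noncomputable def corank (H : ChabautySpace A) : ℕ := finrank ℤ (A ⧸ equivSubmodule H)

variable [Module.Finite ℤ A]

instance instCountable : Countable (ChabautySpace A) :=
  have : Countable A := Finsupp.Countable.of_moduleFinite (R := ℤ)
  have : Countable (Submodule ℤ A) := countable_submodule
  equivSubmodule.injective.countable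

theorem eventually_corank_lt (H : ChabautySpace A) : ∀ᶠ K in 𝓝[≠] H, corank K < corank H := by
  have hle : ∀ᶠ K in 𝓝[≠] H, H.1 ≤ K.1 := nhdsWithin_le_nhds <| eventually_le_of_fg <|
    (Submodule.fg_iff_addSubgroup_fg _).1 (IsNoetherian.noetherian (equivSubmodule H))
  let S : Set (ChabautySpace A) := {K | H.1 ≤ K.1 ∧ corank K = corank H}
  have hS : S.Finite := (finite_setOf_le_and_finrank_quotient_eq (equivSubmodule H)).preimage
    equivSubmodule.injective.injOn
  have hne : ∀ᶠ K in 𝓝[≠] H, K ∉ S := by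
    filter_upwards [self_mem_nhdsWithin,
      nhdsWithin_le_nhds ((hS.sdiff (t := {H})).isClosed.isOpen_compl.mem_nhds fun h => h.2 rfl)]
      with K hKH hK hKS
    exact hK ⟨hKS, hKH⟩
  filter_upwards [hle, hne] with K hHK hK
  refine lt_of_le_of_ne ?_ fun heq => hK ⟨hHK, heq⟩
  exact (Nat.le_add_right _ _).trans_eq (finrank_quotient_add_finrank_map_mkQ hHK)

theorem frequently_corank_add_one_eq {H : ChabautySpace A} (hH : corank H ≠ 0) :
    ∃ᶠ K in 𝓝[≠] H, corank K + 1 = corank H := by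
  obtain ⟨v, hv⟩ := exists_forall_smul_mem_imp_eq_zero hH
  let K (n : ℕ) : ChabautySpace A :=
    equivSubmodule.symm (equivSubmodule H ⊔ Submodule.span ℤ {(n : ℤ) • v})
  have hK (x : A) : ∀ᶠ n in atTop, x ∈ (K n).1 ↔ x ∈ H.1 := by
    by_cases hx : x ∈ H.1
    · exact .of_forall fun n => iff_of_true (Submodule.mem_sup_left hx) hx
    · exact (eventually_notMem_sup_span_smul hv hx).mono fun n hn => iff_of_false hn hx
  have hcorank : ∀ᶠ n in atTop, corank (K n) + 1 = corank H := by
    filter_upwards [eventually_ne_atTop 0] with n hn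
    refine finrank_quotient_sup_span_singleton_add_one fun r hr => ?_
    rw [smul_smul] at hr
    simpa [hn] using hv _ hr
  have hne : ∀ᶠ n in atTop, K n ≠ H := hcorank.mono fun n hn heq => by
    rw [heq] at hn
    omega
  exact (tendsto_nhdsWithin_iff.2 ⟨tendsto_nhds_iff.2 hK, hne⟩).frequently hcorank.frequently

theorem isCantorBendixsonRank_corank :
    IsCantorBendixsonRank (corank : ChabautySpace A → ℕ) :=
  ⟨eventually_corank_lt, fun _ => frequently_corank_add_one_eq⟩

theorem setOf_finrank_le_corank [IsTorsionFree ℤ A] :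
    {H : ChabautySpace A | finrank ℤ A ≤ corank H} = {equivSubmodule.symm ⊥} := by
  ext H
  have hadd := (equivSubmodule H).finrank_quotient_add_finrank
  rw [mem_singleton_iff, Equiv.eq_symm_apply, ← Submodule.finrank_eq_zero, mem_ofPred_eq, corank]
  omega

end FinitelyGenerated

end ChabautySpace

theorem chabauty_Z2_homeomorph_onePoint_sq_general {A : Type*} [AddCommGroup A]
    [TopologicalSpace A] [DiscreteTopology A] [Module.Finite ℤ A] [IsTorsionFree ℤ A] :
    Nonempty (ChabautySpace A ≃ₜ (Fin (finrank ℤ A) → OnePoint ℕ)) := by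
  refine nonempty_homeomorph_of_iterate_derivedSet_eq_singleton (n := finrank ℤ A)
    (p := ChabautySpace.equivSubmodule.symm ⊥) (q := fun _ => OnePoint.infty) ?_ ?_
  · rw [ChabautySpace.isCantorBendixsonRank_corank.iterate_derivedSet_univ,
      ChabautySpace.setOf_finrank_le_corank]
  · rw [isCantorBendixsonRank_ncard_eq_infty.iterate_derivedSet_univ]
    simpa using setOf_card_le_ncard_eq_infty (Y := ℕ) (ι := Fin (finrank ℤ A))

/-- The Chabauty space of the discrete group `ℤ²` is homeomorphic to `ℕ̄ × ℕ̄`, where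
`ℕ̄ = ℕ ∪ {∞}` is the one-point compactification of `ℕ`. -/
theorem chabauty_Z2_homeomorph_onePoint_sq :
    Nonempty (ChabautySpace (ℤ × ℤ) ≃ₜ OnePoint ℕ × OnePoint ℕ) := by
  have hrank : finrank ℤ (ℤ × ℤ) = 2 := by rw [finrank_prod, finrank_self]
  obtain ⟨e⟩ := chabauty_Z2_homeomorph_onePoint_sq_general (A := ℤ × ℤ)
  rw [hrank] at e
  exact ⟨e.trans .finTwoArrow⟩
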